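/- arXiv:1501.05753 — 2 statements merged into one kernel-verified Lean document; each statement's English description precedes it below -/
import Mathlib

section
/- Let ψ : G → H be a homomorphism of countable groups and let φ be a trace on H. (1) If φ satisfies Lück's condition, then the trace φ∘ψ on G satisfies Lück's condition. (2) If ψ is surjective and φ∘ψ satisfies Lück's condition, then φ satisfies Lück's condition. -/
open scoped ComplexOrder ENNReal
open Filter Topology Matrix

set_option synthInstance.maxHeartbeats 1000000
set_option maxHeartbeats 1000000

noncomputable section

instance piLpCompleteSpace {ι : Type*} [Fintype ι] (p : ℝ≥0∞) (β : ι → Type*)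
    [∀ i, UniformSpace (β i)] [∀ i, CompleteSpace (β i)] : CompleteSpace (PiLp p β) :=
  PiLp.completeSpace p β

/-- `φ : G → ℂ` is of positive type: for every finite family `g₁, …, g_m` of elements of
`G`, the matrix `(φ (gᵢ⁻¹ gⱼ))_{i,j}` is positive semidefinite. -/
def IsPosType {G : Type*} [Group G] (φ : G → ℂ) : Prop :=
  ∀ (m : ℕ) (g : Fin m → G), (Matrix.of fun i j => φ ((g i)⁻¹ * g j)).PosSemidef

/-- A trace on a (discrete) group: a function of positive type, constant on conjugacy
classes. -/
def IsGroupTrace {G : Type*} [Group G] (φ : G → ℂ) : Prop :=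
  IsPosType φ ∧ ∀ g h : G, φ (h * g * h⁻¹) = φ g

/-- GNS representation data for a function `φ` on a group `G`: a Hilbert space `H`, a
unital algebra morphism `π` from `ℂG = MonoidAlgebra ℂ G` to the bounded operators on `H`
sending group elements to unitaries (this is the condition `star_of`), and a cyclic vector
`ξ` whose matrix coefficient is (the linear extension of) `φ`. -/
structure GNSRep (G : Type*) [Group G] (φ : G → ℂ) where
  H : Type
  [instNormed : NormedAddCommGroup H]
  [instInner : InnerProductSpace ℂ H]
  [instComplete : CompleteSpace H]
  π : MonoidAlgebra ℂ G →ₐ[ℂ] (H →L[ℂ] H)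
  ξ : H
  star_of : ∀ g : G, star (π (MonoidAlgebra.of ℂ G g)) = π (MonoidAlgebra.of ℂ G g⁻¹)
  inner_eq : ∀ g : G, (inner ℂ ξ (π (MonoidAlgebra.of ℂ G g) ξ) : ℂ) = φ g
  cyclic : Dense (Set.range fun x : MonoidAlgebra ℂ G => π x ξ)

attribute [instance] GNSRep.instNormed GNSRep.instInner GNSRep.instComplete

/-- The vector `ξᵢ ∈ Hⁿ`: the cyclic vector `ξ` in the `i`-th summand, `0` elsewhere. -/
def GNSRep.vec {G : Type*} [Group G] {φ : G → ℂ} (R : GNSRep G φ) {n : ℕ} (i : Fin n) :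
    PiLp 2 (fun _ : Fin n => R.H) :=
  (PiLp.continuousLinearEquiv 2 ℂ (fun _ : Fin n => R.H)).symm (Pi.single i R.ξ)

/-- `|x| = (x* x)^{1/2}`, via the continuous functional calculus. -/
def cfcAbs {A : Type*} [CStarAlgebra A] (x : A) : A := cfc Real.sqrt (star x * x)

/-- The set of continuous majorants of `ln₊` on `[0,∞)`.  (Recall that `Real.log 0 = 0`,
so that `Real.log` agrees with `ln₊` on `[0,∞)`.) -/
def lnPlusMajorants : Set (ℝ → ℝ) :=
  {g | ContinuousOn g (Set.Ici 0) ∧ ∀ t ∈ Set.Ici (0:ℝ), Real.log t ≤ g t}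

/-- The action of a matrix `a ∈ Mₙ(R)` on the Hilbert space `H'ⁿ` (with its `ℓ²` inner
product) induced by a morphism `π : R → B(H')`: `(π_n(a) v)_i = Σ_j π(a i j) (v j)`. -/
def matAct {R H' : Type*} [Ring R] [Algebra ℂ R] [NormedAddCommGroup H']
    [InnerProductSpace ℂ H'] {n : ℕ}
    (π : R →ₐ[ℂ] (H' →L[ℂ] H')) (a : Matrix (Fin n) (Fin n) R) :
    PiLp 2 (fun _ : Fin n => H') →L[ℂ] PiLp 2 (fun _ : Fin n => H') :=
  (PiLp.continuousLinearEquiv 2 ℂ _).symm.toContinuousLinearMap ∘L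
    (ContinuousLinearMap.pi fun i => ∑ j, (π (a i j)).comp (ContinuousLinearMap.proj j)) ∘L
    (PiLp.continuousLinearEquiv 2 ℂ _).toContinuousLinearMap

/-- `(φ ⊗ Trₙ)(ln₊ |a|) := inf { Σᵢ ⟨ξᵢ, g(|π(a)|) ξᵢ⟩ : g : [0,∞) → ℝ continuous, g ≥ ln₊ }`,
an element of `ℝ ∪ {−∞}`, computed in the GNS representation `R`. -/
def GNSRep.lnPlusQ {G : Type*} [Group G] {φ : G → ℂ} (R : GNSRep G φ) {n : ℕ}
    (a : Matrix (Fin n) (Fin n) (MonoidAlgebra ℂ G)) : EReal :=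
  ⨅ g ∈ lnPlusMajorants,
    ((∑ i, (inner ℂ (R.vec i) (cfc g (cfcAbs (matAct R.π a)) (R.vec i)) : ℂ)).re : EReal)

/-- A function `φ` on `G` satisfies Lück's condition if `(φ ⊗ Trₙ)(ln₊|a|) ≥ 0` for every
`n ≥ 1` and every `a ∈ Mₙ(ℤG)` (an `a ∈ Mₙ(ℂG)` whose coefficients are all integers),
where the quantity is computed in any GNS representation of `φ`. -/
def SatisfiesLueck {G : Type*} [Group G] (φ : G → ℂ) : Prop :=
  ∀ (n : ℕ), 0 < n → ∀ a : Matrix (Fin n) (Fin n) (MonoidAlgebra ℂ G),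
    (∀ (i j : Fin n) (g : G), ∃ m : ℤ, (a i j).coeff g = (m : ℂ)) →
    ∀ R : GNSRep G φ, 0 ≤ R.lnPlusQ a

/-!
Since `⟪π(g)ξ, π(h)ξ⟫ = φ(ψ(g⁻¹h))` in both representations, `π(g)ξ ↦ π(ψ g)ξ` extends to an
isometry `V : H_{φ∘ψ} → H_φ` which intertwines `π(x)` with `π(ψ x)`, and also their adjoints, for
every `x ∈ ℂG`. Its amplification therefore intertwines `|π(a)|` with `|π(ψ a)|`, hence all
continuous functions of them, and carries `ξᵢ` to `ξᵢ`, so that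
`(φ∘ψ ⊗ Tr)(ln₊|a|) = (φ ⊗ Tr)(ln₊|ψ a|)`. Now `ψ` maps `Mₙ(ℤG)` into `Mₙ(ℤH)`, and onto it when
`ψ` is surjective.
-/

section GramMatrix

lemma posSemidef_of_forall_submatrix_fin {X R : Type*} [Ring R] [PartialOrder R] [StarRing R]
    {M : Matrix X X R} (hM : ∀ (m : ℕ) (e : Fin m → X), (M.submatrix e e).PosSemidef) :
    M.PosSemidef := by
  refine ⟨.ext fun x y => by simpa using (hM 2 ![x, y]).isHermitian.apply 0 1, fun v => ?_⟩
  let e : Fin v.support.card → X := fun i => v.support.equivFin.symm i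
  have he : Function.Injective e := Subtype.val_injective.comp (Equiv.injective _)
  have he_range : (v.support : Set X) ⊆ Set.range e := fun x hx =>
    ⟨v.support.equivFin ⟨x, hx⟩, by simp [e]⟩
  have hbij : Set.BijOn e (e ⁻¹' v.support) v.support :=
    ⟨Set.mapsTo_preimage _ _, he.injOn, (Set.image_preimage_eq_of_subset he_range).superset⟩
  have hnonneg := (hM _ e).2 (v.comapDomain e he.injOn)
  simp only [← Finsupp.sum_comapDomain e v _ hbij]
  exact hnonneg

universe u v

variable {𝕜 : Type v} [RCLike 𝕜]

lemma posSemidef_map_smul_id {X : Type*} {M : Matrix X X 𝕜} (hM : M.PosSemidef) :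
    (M.map fun c => c • ContinuousLinearMap.id 𝕜 𝕜).PosSemidef := by
  have hiff := (RKHS.posSemidef_tfae (K := M.map fun c => c • ContinuousLinearMap.id 𝕜 𝕜)).out 0 2
  refine hiff.mpr ⟨?_, fun v => ?_⟩
  · refine hM.isHermitian.map _ fun c => ?_
    rw [star_smul, ← ContinuousLinearMap.one_def, star_one]
  · have hswap (x y : X) : starRingEnd 𝕜 (M x y) = M y x := hM.isHermitian.apply y x
    simpa [hswap, mul_left_comm, mul_assoc, mul_comm] using (RCLike.nonneg_iff.mp (hM.2 v)).1

lemma exists_inner_eq_of_posSemidef {X : Type*} [Small.{u} X] {M : Matrix X X 𝕜}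
    (hM : M.PosSemidef) :
    ∃ (E : Type (max u v)) (_ : NormedAddCommGroup E) (_ : InnerProductSpace 𝕜 E)
      (_ : CompleteSpace E) (k : X → E), (∀ x y, inner 𝕜 (k x) (k y) = M x y) ∧
      Dense (Submodule.span 𝕜 (Set.range k) : Set E) := by
  let e : X ≃ Shrink.{u} X := equivShrink X
  let K : Matrix (Shrink.{u} X) (Shrink.{u} X) (𝕜 →L[𝕜] 𝕜) :=
    (M.submatrix e.symm e.symm).map fun c => c • ContinuousLinearMap.id 𝕜 𝕜
  have : Fact K.PosSemidef := ⟨posSemidef_map_smul_id (hM.submatrix e.symm)⟩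
  refine ⟨RKHS.OfKernel K, inferInstance, inferInstance, inferInstance,
    fun x => RKHS.kerFun (RKHS.OfKernel K) (e x) 1, fun x y => ?_, ?_⟩
  · simpa [RKHS.kerFun_apply, K] using hM.isHermitian.apply x y
  · have hdense := RKHS.kerFun_dense (RKHS.OfKernel K)
    rw [← Submodule.dense_iff_topologicalClosure_eq_top] at hdense
    refine hdense.mono (SetLike.coe_subset_coe.mpr (Submodule.span_le.mpr ?_))
    rintro _ ⟨x, c, rfl⟩
    rw [← mul_one c, ← smul_eq_mul, map_smul]
    exact Submodule.smul_mem _ c (Submodule.subset_span ⟨e.symm x, by simp⟩)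

end GramMatrix

section DenseSpan

variable {𝕜 E F : Type*} [RCLike 𝕜] [NormedAddCommGroup E] [InnerProductSpace 𝕜 E]
  [NormedAddCommGroup F] [InnerProductSpace 𝕜 F]

lemma exists_linearIsometry_of_inner_eq {X : Type*} [CompleteSpace F] {k : X → E} {k' : X → F}
    (hdense : Dense (Submodule.span 𝕜 (Set.range k) : Set E))
    (hinner : ∀ x y, inner 𝕜 (k' x) (k' y) = inner 𝕜 (k x) (k y)) :
    ∃ V : E →ₗᵢ[𝕜] F, ∀ x, V (k x) = k' x := by
  let e := Finsupp.linearCombination 𝕜 k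
  let f := Finsupp.linearCombination 𝕜 k'
  have he_dense : DenseRange e := by
    rwa [DenseRange, ← LinearMap.coe_range, Finsupp.range_linearCombination]
  have hinner_comb (a b : X →₀ 𝕜) : inner 𝕜 (f a) (f b) = inner 𝕜 (e a) (e b) := by
    simp only [e, f, Finsupp.linearCombination_apply, Finsupp.sum_inner, Finsupp.inner_sum,
      inner_smul_left, inner_smul_right, hinner]
  have hnorm : ∃ C, ∀ a, ‖f a‖ ≤ C * ‖e a‖ :=
    ⟨1, fun a => by rw [one_mul, norm_eq_sqrt_re_inner (𝕜 := 𝕜), hinner_comb,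
      ← norm_eq_sqrt_re_inner]⟩
  have hext : ∀ a, f.extendOfNorm e (e a) = f a := LinearMap.extendOfNorm_eq he_dense hnorm
  refine ⟨(f.extendOfNorm e).toLinearMap.isometryOfInner fun u v => ?_, fun x => ?_⟩
  · refine he_dense.induction_on₂ (isClosed_eq (by fun_prop) (by fun_prop)) (fun a b => ?_) u v
    simp only [ContinuousLinearMap.coe_coe, hext, hinner_comb]
  · simpa [e, f] using hext (Finsupp.single x 1)

lemma exists_unitary_translation {G : Type*} [Group G] [CompleteSpace E] {k : G → E}
    (hdense : Dense (Submodule.span 𝕜 (Set.range k) : Set E))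
    (hinner : ∀ g x y, inner 𝕜 (k (g * x)) (k (g * y)) = inner 𝕜 (k x) (k y)) :
    ∃ U : G →* (E →L[𝕜] E), (∀ g x, U g (k x) = k (g * x)) ∧ ∀ g, star (U g) = U g⁻¹ := by
  choose V hV using fun g => exists_linearIsometry_of_inner_eq hdense (hinner g)
  let U : G →* (E →L[𝕜] E) :=
    { toFun g := (V g).toContinuousLinearMap
      map_one' := ContinuousLinearMap.ext_on hdense <|
        Set.forall_mem_range.mpr fun x => by simp [hV]
      map_mul' g h := ContinuousLinearMap.ext_on hdense <|
        Set.forall_mem_range.mpr fun x => by simp [hV, mul_assoc] }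
  refine ⟨U, hV, fun g => ((ContinuousLinearMap.eq_adjoint_iff _ _).mpr fun u v => ?_).symm⟩
  have hcancel : U g (U g⁻¹ u) = u := by
    rw [← mul_apply_eq_comp, ← map_mul, mul_inv_cancel, map_one, one_apply_eq_self]
  calc inner 𝕜 (U g⁻¹ u) v = inner 𝕜 (U g (U g⁻¹ u)) (U g v) := ((V g).inner_map_map _ _).symm
    _ = inner 𝕜 u (U g v) := by rw [hcancel]

end DenseSpan

section Intertwining

variable {E F : Type*} [NormedAddCommGroup E] [InnerProductSpace ℂ E] [CompleteSpace E]
  [NormedAddCommGroup F] [InnerProductSpace ℂ F] [CompleteSpace F]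

lemma starAlgHom_intertwine {K : Set ℝ} [CompactSpace K] {Φ : C(K, ℝ) →⋆ₐ[ℝ] (E →L[ℂ] E)}
    {Ψ : C(K, ℝ) →⋆ₐ[ℝ] (F →L[ℂ] F)} (hΦ : Continuous Φ) (hΨ : Continuous Ψ) {V : E →L[ℂ] F}
    (hid : V ∘L Φ (.restrict K (.id ℝ)) = Ψ (.restrict K (.id ℝ)) ∘L V) (f : C(K, ℝ)) :
    V ∘L Φ f = Ψ f ∘L V := by
  induction f using ContinuousMap.induction_on_of_compact with
  | const r =>
    rw [show ContinuousMap.const K r = algebraMap ℝ C(K, ℝ) r from rfl, AlgHomClass.commutes,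
      AlgHomClass.commutes]
    ext x
    simp [Algebra.algebraMap_eq_smul_one]
  | id => exact hid
  | star_id => rwa [star_trivial]
  | add f g hf hg =>
    simp only [map_add, ContinuousLinearMap.comp_add, ContinuousLinearMap.add_comp, hf, hg]
  | mul f g hf hg =>
    simp only [map_mul, ContinuousLinearMap.mul_def]
    rw [← ContinuousLinearMap.comp_assoc, hf, ContinuousLinearMap.comp_assoc, hg,
      ContinuousLinearMap.comp_assoc]
  | frequently f hf =>
    have hclosed : IsClosed {f : C(K, ℝ) | V ∘L Φ f = Ψ f ∘L V} :=
      isClosed_eq (by fun_prop) (by fun_prop)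
    exact hclosed.mem_of_frequently_of_tendsto hf tendsto_id

lemma cfc_intertwine {S : E →L[ℂ] E} {T : F →L[ℂ] F} (hS : IsSelfAdjoint S)
    (hT : IsSelfAdjoint T) {V : E →L[ℂ] F} (hV : V ∘L S = T ∘L V) {g : ℝ → ℝ}
    (hg : ContinuousOn g (spectrum ℝ S ∪ spectrum ℝ T)) :
    V ∘L cfc g S = cfc g T ∘L V := by
  have hSK : spectrum ℝ S ⊆ spectrum ℝ S ∪ spectrum ℝ T := Set.subset_union_left
  have hTK : spectrum ℝ T ⊆ spectrum ℝ S ∪ spectrum ℝ T := Set.subset_union_right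
  have : CompactSpace ↥(spectrum ℝ S ∪ spectrum ℝ T) := isCompact_iff_compactSpace.mp <|
    (ContinuousFunctionalCalculus.isCompact_spectrum S).union
      (ContinuousFunctionalCalculus.isCompact_spectrum T)
  rw [cfc_apply g S hS (hg.mono hSK), cfc_apply g T hT (hg.mono hTK)]
  refine starAlgHom_intertwine (cfcHomSuperset_continuous hS hSK)
    (cfcHomSuperset_continuous hT hTK) ?_ ⟨_, hg.domRestrict⟩
  rwa [cfcHomSuperset_id, cfcHomSuperset_id]

/-- `V` intertwines the bounded operators `A` and `B` together with their adjoints. For `V`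
intertwining `A` and `B` alone, `V` need not intertwine `|A|` and `|B|`. -/
structure StarIntertwines (V : E →L[ℂ] F) (A : E →L[ℂ] E) (B : F →L[ℂ] F) : Prop where
  comp_eq : V ∘L A = B ∘L V
  comp_star_eq : V ∘L star A = star B ∘L V

lemma isSelfAdjoint_cfcAbs {A : Type*} [CStarAlgebra A] (x : A) : IsSelfAdjoint (cfcAbs x) :=
  cfc_predicate _ _

lemma spectrum_cfcAbs_subset_Ici {A : Type*} [CStarAlgebra A] (x : A) :
    spectrum ℝ (cfcAbs x) ⊆ Set.Ici 0 := by
  rw [cfcAbs, cfc_map_spectrum Real.sqrt (star x * x) (IsSelfAdjoint.star_mul_self x)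
    Real.continuous_sqrt.continuousOn]
  rintro _ ⟨t, -, rfl⟩
  exact Real.sqrt_nonneg t

namespace StarIntertwines

variable {V : E →L[ℂ] F} {A A' : E →L[ℂ] E} {B B' : F →L[ℂ] F}

lemma add (h : StarIntertwines V A B) (h' : StarIntertwines V A' B') :
    StarIntertwines V (A + A') (B + B') where
  comp_eq := by
    rw [ContinuousLinearMap.comp_add, ContinuousLinearMap.add_comp, h.comp_eq, h'.comp_eq]
  comp_star_eq := by
    rw [star_add, star_add, ContinuousLinearMap.comp_add, ContinuousLinearMap.add_comp,
      h.comp_star_eq, h'.comp_star_eq]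

lemma smul (h : StarIntertwines V A B) (c : ℂ) : StarIntertwines V (c • A) (c • B) where
  comp_eq := by rw [ContinuousLinearMap.comp_smul, ContinuousLinearMap.smul_comp, h.comp_eq]
  comp_star_eq := by
    rw [star_smul, star_smul, ContinuousLinearMap.comp_smul, ContinuousLinearMap.smul_comp,
      h.comp_star_eq]

lemma comp_star_mul_self (h : StarIntertwines V A B) :
    V ∘L (star A * A) = (star B * B) ∘L V := by
  simp only [ContinuousLinearMap.mul_def]
  rw [← ContinuousLinearMap.comp_assoc, h.comp_star_eq, ContinuousLinearMap.comp_assoc,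
    h.comp_eq, ContinuousLinearMap.comp_assoc]

lemma comp_cfcAbs (h : StarIntertwines V A B) : V ∘L cfcAbs A = cfcAbs B ∘L V :=
  cfc_intertwine (.star_mul_self A) (.star_mul_self B) h.comp_star_mul_self
    Real.continuous_sqrt.continuousOn

lemma comp_cfc_cfcAbs (h : StarIntertwines V A B) {g : ℝ → ℝ} (hg : ContinuousOn g (Set.Ici 0)) :
    V ∘L cfc g (cfcAbs A) = cfc g (cfcAbs B) ∘L V :=
  cfc_intertwine (isSelfAdjoint_cfcAbs A) (isSelfAdjoint_cfcAbs B) h.comp_cfcAbs <|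
    hg.mono (Set.union_subset (spectrum_cfcAbs_subset_Ici A) (spectrum_cfcAbs_subset_Ici B))

lemma inner_cfc_cfcAbs {V : E →ₗᵢ[ℂ] F} (h : StarIntertwines V.toContinuousLinearMap A B)
    {g : ℝ → ℝ} (hg : ContinuousOn g (Set.Ici 0)) (u v : E) :
    inner ℂ (V u) (cfc g (cfcAbs B) (V v)) = inner ℂ u (cfc g (cfcAbs A) v) := by
  have hcomm : V (cfc g (cfcAbs A) v) = cfc g (cfcAbs B) (V v) :=
    DFunLike.congr_fun (h.comp_cfc_cfcAbs hg) v
  rw [← hcomm, V.inner_map_map]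

end StarIntertwines

end Intertwining

section Amplification

variable {𝕜 E F : Type*} [RCLike 𝕜] [NormedAddCommGroup E] [InnerProductSpace 𝕜 E]
  [NormedAddCommGroup F] [InnerProductSpace 𝕜 F]

/-- The amplification `V ⊕ ⋯ ⊕ V : Eⁿ → Fⁿ` of an isometry `V : E → F`, where `Eⁿ` and `Fⁿ`
carry their `ℓ²` inner products. -/
def amplification (ι : Type*) [Fintype ι] (V : E →ₗᵢ[𝕜] F) :
    PiLp 2 (fun _ : ι => E) →ₗᵢ[𝕜] PiLp 2 (fun _ : ι => F) :=
  LinearMap.isometryOfInner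
    { toFun v := WithLp.toLp 2 fun i => V (v i)
      map_add' u v := by ext; simp
      map_smul' c v := by ext; simp }
    fun u v => by simp [PiLp.inner_apply]

@[simp]
lemma amplification_apply {ι : Type*} [Fintype ι] (V : E →ₗᵢ[𝕜] F) (v : PiLp 2 fun _ : ι => E)
    (i : ι) : amplification ι V v i = V (v i) :=
  rfl

end Amplification

section MatrixAction

variable {E F : Type*} [NormedAddCommGroup E] [InnerProductSpace ℂ E]
  [NormedAddCommGroup F] [InnerProductSpace ℂ F]

@[simp]
lemma matAct_apply {R : Type*} [Ring R] [Algebra ℂ R] {n : ℕ} (π : R →ₐ[ℂ] (E →L[ℂ] E))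
    (a : Matrix (Fin n) (Fin n) R) (v : PiLp 2 fun _ : Fin n => E) (i : Fin n) :
    matAct π a v i = ∑ j, π (a i j) (v j) := by
  simp [matAct]

variable [CompleteSpace E] [CompleteSpace F]

@[simp]
lemma star_matAct_apply {R : Type*} [Ring R] [Algebra ℂ R] {n : ℕ} (π : R →ₐ[ℂ] (E →L[ℂ] E))
    (a : Matrix (Fin n) (Fin n) R) (v : PiLp 2 fun _ : Fin n => E) (i : Fin n) :
    star (matAct π a) v i = ∑ j, star (π (a j i)) (v j) := by
  refine ext_inner_left ℂ fun w => ?_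
  calc inner ℂ w (star (matAct π a) v i)
      = inner ℂ (PiLp.single 2 i w) (star (matAct π a) v) := by
        rw [PiLp.inner_apply, Finset.sum_eq_single i (fun j _ hj => by simp [hj]) (by simp)]
        simp
    _ = inner ℂ (matAct π a (PiLp.single 2 i w)) v :=
        ContinuousLinearMap.adjoint_inner_right _ _ _
    _ = ∑ j, inner ℂ (π (a j i) w) (v j) := by
        simp [PiLp.inner_apply, apply_ite]
    _ = inner ℂ w (∑ j, star (π (a j i)) (v j)) := by
        simp [ContinuousLinearMap.star_eq_adjoint, ContinuousLinearMap.adjoint_inner_right]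

lemma StarIntertwines.amplification_matAct {R S : Type*} [Ring R] [Algebra ℂ R] [Ring S]
    [Algebra ℂ S] {π : R →ₐ[ℂ] (E →L[ℂ] E)} {ρ : S →ₐ[ℂ] (F →L[ℂ] F)} {V : E →ₗᵢ[ℂ] F} {n : ℕ}
    {a : Matrix (Fin n) (Fin n) R} {b : Matrix (Fin n) (Fin n) S}
    (h : ∀ i j, StarIntertwines V.toContinuousLinearMap (π (a i j)) (ρ (b i j))) :
    StarIntertwines (amplification (Fin n) V).toContinuousLinearMap (matAct π a)
      (matAct ρ b) where
  comp_eq := by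
    have hentry (i j : Fin n) (u : E) : V (π (a i j) u) = ρ (b i j) (V u) :=
      DFunLike.congr_fun (h i j).comp_eq u
    ext v i
    simp [hentry]
  comp_star_eq := by
    have hentry (i j : Fin n) (u : E) : V (star (π (a i j)) u) = star (ρ (b i j)) (V u) :=
      DFunLike.congr_fun (h i j).comp_star_eq u
    ext v i
    simp [hentry]

end MatrixAction

section GroupRing

variable {k G H : Type*}

lemma exists_intCast_coeff_mapDomain [Ring k] (f : G → H) {x : MonoidAlgebra k G}
    (hx : ∀ g, ∃ m : ℤ, x.coeff g = m) (h : H) :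
    ∃ m : ℤ, (MonoidAlgebra.mapDomain f x).coeff h = m := by
  classical
  choose m hm using hx
  refine ⟨∑ g ∈ x.coeff.support, if f g = h then m g else 0, ?_⟩
  simp [MonoidAlgebra.mapDomain, Finsupp.mapDomain, Finsupp.sum, Finsupp.finsetSum_apply,
    Finsupp.single_apply, hm]

lemma mapDomain_mapDomain_of_rightInverse [Semiring k] {f : G → H} {s : H → G}
    (hs : Function.RightInverse s f) (x : MonoidAlgebra k H) :
    MonoidAlgebra.mapDomain f (MonoidAlgebra.mapDomain s x) = x := by
  simp [MonoidAlgebra.mapDomain, ← Finsupp.mapDomain_comp, hs.comp_eq_id]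

end GroupRing

lemma IsPosType.posSemidef {G : Type*} [Group G] {φ : G → ℂ} (hφ : IsPosType φ) :
    (Matrix.of fun x y => φ (x⁻¹ * y)).PosSemidef :=
  posSemidef_of_forall_submatrix_fin hφ

namespace GNSRep

variable {G H : Type*} [Group G] [Group H] {φ : H → ℂ}

lemma inner_π_of_ξ (R : GNSRep H φ) (g h : H) :
    inner ℂ (R.π (MonoidAlgebra.of ℂ H g) R.ξ) (R.π (MonoidAlgebra.of ℂ H h) R.ξ)
      = φ (g⁻¹ * h) := by
  rw [← R.inner_eq, map_mul, map_mul, ← R.star_of, ContinuousLinearMap.star_eq_adjoint]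
  exact (ContinuousLinearMap.adjoint_inner_right _ _ _).symm

lemma dense_span_π_of_ξ (R : GNSRep H φ) :
    Dense (Submodule.span ℂ (Set.range fun h => R.π (MonoidAlgebra.of ℂ H h) R.ξ) : Set R.H) := by
  refine R.cyclic.mono ?_
  rintro _ ⟨x, rfl⟩
  induction x using MonoidAlgebra.induction_on with
  | of h => exact Submodule.subset_span ⟨h, rfl⟩
  | add x y hx hy => simpa using Submodule.add_mem _ hx hy
  | smul c x hx => simpa using Submodule.smul_mem _ c hx

lemma nonempty_of_isPosType [Small.{0} H] (hφ : IsPosType φ) : Nonempty (GNSRep H φ) := by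
  obtain ⟨E, _, _, _, k, hk, hdense⟩ := exists_inner_eq_of_posSemidef.{0} hφ.posSemidef
  obtain ⟨U, hU, hU_star⟩ := exists_unitary_translation hdense fun g x y => by
    simp [hk, mul_assoc]
  let π := MonoidAlgebra.lift ℂ (E →L[ℂ] E) H U
  have hπ (g : H) : π (MonoidAlgebra.of ℂ H g) = U g := MonoidAlgebra.lift_of U g
  refine ⟨{ H := E, π := π, ξ := k 1, star_of := fun g => ?_, inner_eq := fun g => ?_,
            cyclic := ?_ }⟩
  · rw [hπ, hπ, hU_star]
  · rw [hπ, hU, hk, Matrix.of_apply, inv_one, one_mul, mul_one]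
  · let orbit : MonoidAlgebra ℂ H →ₗ[ℂ] E :=
      (ContinuousLinearMap.apply ℂ E (k 1)).toLinearMap ∘ₗ π.toLinearMap
    have hspan : Submodule.span ℂ (Set.range k) ≤ LinearMap.range orbit := by
      refine Submodule.span_le.mpr ?_
      rintro _ ⟨x, rfl⟩
      exact ⟨MonoidAlgebra.of ℂ H x, by simp [orbit, -MonoidAlgebra.of_apply, hπ, hU]⟩
    exact hdense.mono hspan

/-- The pullback of a GNS representation along a surjective homomorphism `ψ`; surjectivity keeps
`ξ` cyclic. -/
def comap (R : GNSRep H φ) (ψ : G →* H) (hψ : Function.Surjective ψ) : GNSRep G (φ ∘ ψ) where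
  H := R.H
  π := R.π.comp (MonoidAlgebra.mapDomainAlgHom ℂ ℂ ψ)
  ξ := R.ξ
  star_of g := by simpa using R.star_of (ψ g)
  inner_eq g := by simpa using R.inner_eq (ψ g)
  cyclic := by
    have hsurj : Function.Surjective (MonoidAlgebra.mapDomainAlgHom ℂ ℂ ψ) := fun x =>
      ⟨_, mapDomain_mapDomain_of_rightInverse (Function.rightInverse_surjInv hψ) x⟩
    exact (hsurj.range_comp fun x => R.π x R.ξ).symm ▸ R.cyclic

lemma lnPlusQ_comap (R : GNSRep H φ) (ψ : G →* H) (hψ : Function.Surjective ψ) {n : ℕ}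
    (a : Matrix (Fin n) (Fin n) (MonoidAlgebra ℂ G)) :
    (R.comap ψ hψ).lnPlusQ a = R.lnPlusQ (a.map (MonoidAlgebra.mapDomain ψ)) :=
  rfl

variable {ψ : G →* H}

lemma exists_linearIsometry_map_π_of_ξ (R : GNSRep G (φ ∘ ψ)) (R' : GNSRep H φ) :
    ∃ V : R.H →ₗᵢ[ℂ] R'.H, ∀ g,
      V (R.π (MonoidAlgebra.of ℂ G g) R.ξ) = R'.π (MonoidAlgebra.of ℂ H (ψ g)) R'.ξ :=
  exists_linearIsometry_of_inner_eq R.dense_span_π_of_ξ fun g h => by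
    rw [inner_π_of_ξ, inner_π_of_ξ, Function.comp_apply, map_mul, map_inv]

lemma comp_π_of {R : GNSRep G (φ ∘ ψ)} {R' : GNSRep H φ} {V : R.H →ₗᵢ[ℂ] R'.H}
    (hV : ∀ g, V (R.π (MonoidAlgebra.of ℂ G g) R.ξ) = R'.π (MonoidAlgebra.of ℂ H (ψ g)) R'.ξ)
    (g : G) : V.toContinuousLinearMap ∘L R.π (MonoidAlgebra.of ℂ G g) =
      R'.π (MonoidAlgebra.of ℂ H (ψ g)) ∘L V.toContinuousLinearMap := by
  refine ContinuousLinearMap.ext_on R.dense_span_π_of_ξ (Set.forall_mem_range.mpr fun h => ?_)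
  calc V (R.π (MonoidAlgebra.of ℂ G g) (R.π (MonoidAlgebra.of ℂ G h) R.ξ))
      = V (R.π (MonoidAlgebra.of ℂ G (g * h)) R.ξ) := by
        rw [map_mul, map_mul, mul_apply_eq_comp]
    _ = R'.π (MonoidAlgebra.of ℂ H (ψ (g * h))) R'.ξ := hV _
    _ = R'.π (MonoidAlgebra.of ℂ H (ψ g)) (V (R.π (MonoidAlgebra.of ℂ G h) R.ξ)) := by
        rw [hV, map_mul, map_mul, map_mul, mul_apply_eq_comp]

lemma starIntertwines_π {R : GNSRep G (φ ∘ ψ)} {R' : GNSRep H φ} {V : R.H →L[ℂ] R'.H}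
    (hV : ∀ g, V ∘L R.π (MonoidAlgebra.of ℂ G g) = R'.π (MonoidAlgebra.of ℂ H (ψ g)) ∘L V)
    (x : MonoidAlgebra ℂ G) :
    StarIntertwines V (R.π x) (R'.π (MonoidAlgebra.mapDomain ψ x)) := by
  induction x using MonoidAlgebra.induction_on with
  | of g =>
    rw [MonoidAlgebra.of_apply, MonoidAlgebra.mapDomain_single, ← MonoidAlgebra.of_apply,
      ← MonoidAlgebra.of_apply]
    exact ⟨hV g, by rw [R.star_of, R'.star_of, ← map_inv, hV]⟩
  | add x y hx hy => simpa only [MonoidAlgebra.mapDomain_add, map_add] using hx.add hy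
  | smul c x hx => simpa only [MonoidAlgebra.mapDomain_smul, map_smul] using hx.smul c

lemma exists_linearIsometry_starIntertwines (R : GNSRep G (φ ∘ ψ)) (R' : GNSRep H φ) :
    ∃ V : R.H →ₗᵢ[ℂ] R'.H, V R.ξ = R'.ξ ∧ ∀ x,
      StarIntertwines V.toContinuousLinearMap (R.π x) (R'.π (MonoidAlgebra.mapDomain ψ x)) := by
  obtain ⟨V, hV⟩ := R.exists_linearIsometry_map_π_of_ξ R'
  refine ⟨V, ?_, starIntertwines_π (comp_π_of hV)⟩
  simpa only [map_one, one_apply_eq_self] using hV 1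

lemma amplification_vec {φ' : G → ℂ} {R : GNSRep G φ'} {R' : GNSRep H φ} {V : R.H →ₗᵢ[ℂ] R'.H}
    (hξ : V R.ξ = R'.ξ) {n : ℕ} (i : Fin n) :
    amplification (Fin n) V (R.vec i) = R'.vec i := by
  ext j
  obtain rfl | hij := eq_or_ne j i
  · simp [vec, hξ]
  · simp [vec, hij]

lemma lnPlusQ_eq_lnPlusQ_map (R : GNSRep G (φ ∘ ψ)) (R' : GNSRep H φ) {n : ℕ}
    (a : Matrix (Fin n) (Fin n) (MonoidAlgebra ℂ G)) :
    R.lnPlusQ a = R'.lnPlusQ (a.map (MonoidAlgebra.mapDomain ψ)) := by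
  obtain ⟨V, hξ, hV⟩ := R.exists_linearIsometry_starIntertwines R'
  have hmat : StarIntertwines (amplification (Fin n) V).toContinuousLinearMap (matAct R.π a)
      (matAct R'.π (a.map (MonoidAlgebra.mapDomain ψ))) :=
    .amplification_matAct fun i j => hV (a i j)
  refine iInf_congr fun g => iInf_congr fun hg => ?_
  simp only [← amplification_vec hξ, hmat.inner_cfc_cfcAbs hg.1]

end GNSRep

namespace SatisfiesLueck

variable {G H : Type*} [Group G] [Group H] {ψ : G →* H} {φ : H → ℂ}

lemma comp [Small.{0} H] (hφ : IsPosType φ) (h : SatisfiesLueck φ) :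
    SatisfiesLueck (φ ∘ ψ) := by
  intro n hn a ha R
  obtain ⟨R'⟩ := GNSRep.nonempty_of_isPosType hφ
  rw [R.lnPlusQ_eq_lnPlusQ_map R' a]
  exact h n hn _ (fun i j => exists_intCast_coeff_mapDomain ψ (ha i j)) R'

lemma of_comp (hψ : Function.Surjective ψ) (h : SatisfiesLueck (φ ∘ ψ)) : SatisfiesLueck φ := by
  intro n hn b hb R
  obtain ⟨s, hs⟩ := hψ.hasRightInverse
  have hlift : (b.map (MonoidAlgebra.mapDomain s)).map (MonoidAlgebra.mapDomain ψ) = b :=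
    Matrix.ext fun i j => mapDomain_mapDomain_of_rightInverse hs (b i j)
  rw [← hlift, ← R.lnPlusQ_comap ψ hψ]
  exact h n hn _ (fun i j => exists_intCast_coeff_mapDomain s (hb i j)) _

end SatisfiesLueck

theorem stmt2_general {G H : Type*} [Group G] [Group H] [Small.{0} H] (ψ : G →* H) (φ : H → ℂ)
    (hφ : IsPosType φ) :
    (SatisfiesLueck φ → SatisfiesLueck (φ ∘ ψ)) ∧
    (Function.Surjective ψ → SatisfiesLueck (φ ∘ ψ) → SatisfiesLueck φ) :=
  ⟨.comp hφ, .of_comp⟩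

/-- let `ψ : G → H` be a homomorphism of countable groups and `φ` a trace on
`H`.  (1) If `φ` satisfies Lück's condition then so does `φ ∘ ψ`.  (2) If `ψ` is onto and
`φ ∘ ψ` satisfies Lück's condition, then so does `φ`. -/
theorem stmt2 {G H : Type*} [Group G] [Group H] [Countable G] [Countable H]
    (ψ : G →* H) (φ : H → ℂ) (hφ : IsGroupTrace φ) :
    (SatisfiesLueck φ → SatisfiesLueck (φ ∘ ψ)) ∧
    (Function.Surjective ψ → SatisfiesLueck (φ ∘ ψ) → SatisfiesLueck φ) :=
  stmt2_general ψ φ hφ.1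

end
end

section
/- Let Γ be a countable group and τ_Γ its canonical trace (τ_Γ(x) = 1 if x = 1, and 0 otherwise). The following are equivalent: (i) Γ is sofic; (ii) there exists a group G and a surjective group homomorphism φ : G → Γ such that the function τ_Γ∘φ : G → ℂ is a pointwise limit of permutational traces on G; (iii) for every surjective group homomorphism φ : F_∞ → Γ from the free group F_∞ on countably many generators, the function τ_Γ∘φ : F_∞ → ℂ is a pointwise limit of permutational traces on F_∞. -/
open scoped ComplexOrder ENNReal
open Filter Topology Matrix

set_option synthInstance.maxHeartbeats 1000000
set_option maxHeartbeats 1000000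

noncomputable section

/-- `τ_k(σ) = card {x | σ x = x} / k`, the fixed-point ratio of a permutation. -/
def permFixRatio {k : ℕ} (σ : Equiv.Perm (Fin k)) : ℝ :=
  (Finset.univ.filter fun x => σ x = x).card / k

/-- `δ_k(σ₁, σ₂) = card {x | σ₁ x ≠ σ₂ x} / k`, the normalized Hamming distance. -/
def permHamming {k : ℕ} (σ₁ σ₂ : Equiv.Perm (Fin k)) : ℝ :=
  (Finset.univ.filter fun x => σ₁ x ≠ σ₂ x).card / k

/-- A group `Γ` is sofic: there are maps `f_n : Γ → S_{k_n}` (not necessarily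
homomorphisms) which are asymptotically multiplicative and asymptotically free. -/
def IsSofic (Γ : Type*) [Group Γ] : Prop :=
  ∃ (k : ℕ → ℕ) (f : ∀ n, Γ → Equiv.Perm (Fin (k n))),
    (∀ n, 0 < k n) ∧
    (∀ x y : Γ, Tendsto (fun n => permHamming (f n x * f n y) (f n (x * y))) atTop (𝓝 0)) ∧
    (∀ x : Γ, x ≠ 1 → Tendsto (fun n => permHamming (f n x) 1) atTop (𝓝 1))

open Classical in
/-- The canonical trace on a group: `τ_Γ(x) = 1` if `x = 1` and `0` otherwise. -/
def canonicalTrace (Γ : Type*) [Group Γ] : Γ → ℂ := fun x => if x = 1 then 1 else 0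

/-- A permutational trace on `G`: a function of the form `g ↦ τ_k(π g)` for some `k ≥ 1`
and some group homomorphism `π : G → S_k`. -/
def IsPermutationalTrace {G : Type*} [Group G] (ψ : G → ℂ) : Prop :=
  ∃ (k : ℕ) (_ : 0 < k) (π : G →* Equiv.Perm (Fin k)),
    ψ = fun g => (permFixRatio (π g) : ℂ)

/-!
Sequences of permutations whose Hamming distance to the identity tends to `0` form a normal
subgroup of `∏ₙ S_{kₙ}`, so an asymptotically multiplicative sequence of maps is a genuine
homomorphism from `Γ` into the quotient. Free groups being projective, its composition with
`φ : F → Γ` lifts to a homomorphism `F → ∏ₙ S_{kₙ}`, whose components yield the permutational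
traces. Conversely, composing homomorphisms `G → S_{kₙ}` with a set-theoretic section of `φ`
gives a sofic approximation, because the failure of multiplicativity of the section lies in
`ker φ`, where the traces tend to `1`.
-/

section HammingDistance

variable {k : ℕ} (a b c : Equiv.Perm (Fin k))

theorem permHamming_eq_hammingDist_div : permHamming a b = hammingDist a b / k := rfl

theorem permHamming_nonneg : 0 ≤ permHamming a b := by
  rw [permHamming_eq_hammingDist_div]
  positivity

theorem permHamming_self : permHamming a a = 0 := by
  simp [permHamming_eq_hammingDist_div]

theorem permHamming_comm : permHamming a b = permHamming b a := by
  simp only [permHamming_eq_hammingDist_div, hammingDist_comm]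

theorem permHamming_triangle : permHamming a c ≤ permHamming a b + permHamming b c := by
  simp only [permHamming_eq_hammingDist_div, ← add_div]
  gcongr
  exact_mod_cast hammingDist_triangle a b c

theorem abs_permHamming_sub_permHamming_le :
    |permHamming a c - permHamming b c| ≤ permHamming a b := by
  have hac := permHamming_triangle a b c
  have hbc := permHamming_triangle b a c
  rw [permHamming_comm b a] at hbc
  rw [abs_sub_le_iff]
  constructor <;> linarith

theorem permHamming_mul_left : permHamming (c * a) (c * b) = permHamming a b := by
  simp [permHamming]

theorem permHamming_mul_right : permHamming (a * c) (b * c) = permHamming a b := by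
  unfold permHamming
  congr 2
  exact Finset.card_equiv c fun x => by
    rw [Finset.mem_filter_univ, Finset.mem_filter_univ, Equiv.Perm.mul_apply, Equiv.Perm.mul_apply]

theorem permHamming_inv_mul_one : permHamming (a⁻¹ * b) 1 = permHamming b a := by
  rw [← permHamming_mul_left (a⁻¹ * b) 1 a, mul_inv_cancel_left, mul_one]

theorem permFixRatio_eq_one_sub_permHamming (hk : 0 < k) :
    permFixRatio a = 1 - permHamming a 1 := by
  have card_add : (Finset.univ.filter fun x => a x = x).card +
      (Finset.univ.filter fun x => a x ≠ x).card = k := by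
    simpa using Finset.card_filter_add_card_filter_not (s := Finset.univ) fun x => a x = x
  rw [eq_sub_iff_add_eq]
  simp only [permFixRatio, permHamming, Equiv.Perm.one_apply]
  rw [← add_div, div_eq_one_iff_eq (by positivity)]
  exact_mod_cast card_add

end HammingDistance

section AsymptoticEquality

variable {ι : Type*} {k : ι → ℕ} {l : Filter ι}

/-- The normal subgroup of `∏ᵢ S_{kᵢ}` of families whose normalized Hamming distance to the
identity tends to `0` along the filter `l`. Two families are congruent modulo this subgroup
exactly when they are asymptotically equal. -/
def asymptoticallyTrivial (k : ι → ℕ) (l : Filter ι) :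
    Subgroup (∀ i, Equiv.Perm (Fin (k i))) where
  carrier := {a | Tendsto (fun i => permHamming (a i) 1) l (𝓝 0)}
  one_mem' := tendsto_const_nhds.congr fun _ => (permHamming_self _).symm
  mul_mem' {a b} ha hb := by
    refine squeeze_zero (fun i => permHamming_nonneg _ _) (fun i => ?_)
      (by simpa using Tendsto.add ha hb)
    calc permHamming (a i * b i) 1
        ≤ permHamming (a i * b i) (1 * b i) + permHamming (1 * b i) 1 :=
          permHamming_triangle _ _ _
      _ = permHamming (a i) 1 + permHamming (b i) 1 := by
          rw [permHamming_mul_right, one_mul]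
  inv_mem' {a} ha := by
    refine Tendsto.congr (fun i => ?_) ha
    rw [Pi.inv_apply, ← mul_one (a i)⁻¹, permHamming_inv_mul_one, permHamming_comm]

theorem mem_asymptoticallyTrivial_iff {a : ∀ i, Equiv.Perm (Fin (k i))} :
    a ∈ asymptoticallyTrivial k l ↔ Tendsto (fun i => permHamming (a i) 1) l (𝓝 0) :=
  Iff.rfl

instance asymptoticallyTrivial_normal : (asymptoticallyTrivial k l).Normal where
  conj_mem a ha g := by
    refine Tendsto.congr (fun i => ?_) ha
    calc permHamming (a i) 1
        = permHamming (g i * a i) (g i * 1) := (permHamming_mul_left _ _ _).symm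
      _ = permHamming (g i * a i * (g i)⁻¹) (g i * 1 * (g i)⁻¹) :=
          (permHamming_mul_right _ _ _).symm
      _ = permHamming (g i * a i * (g i)⁻¹) 1 := by rw [mul_one, mul_inv_cancel]

/-- The group of families of permutations up to asymptotic equality along `l`; the metric
ultraproduct of the `S_{kᵢ}` when `l` is an ultrafilter. -/
abbrev AsymptoticPerm (k : ι → ℕ) (l : Filter ι) : Type _ :=
  (∀ i, Equiv.Perm (Fin (k i))) ⧸ asymptoticallyTrivial k l

theorem asymptoticPerm_mk_eq_iff {a b : ∀ i, Equiv.Perm (Fin (k i))} :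
    (a : AsymptoticPerm k l) = b ↔ Tendsto (fun i => permHamming (a i) (b i)) l (𝓝 0) := by
  rw [eq_comm, QuotientGroup.eq, mem_asymptoticallyTrivial_iff]
  simp only [Pi.mul_apply, Pi.inv_apply, permHamming_inv_mul_one]

theorem tendsto_permHamming_of_asymptoticPerm_mk_eq {a b c : ∀ i, Equiv.Perm (Fin (k i))} {t : ℝ}
    (hab : (a : AsymptoticPerm k l) = b)
    (hb : Tendsto (fun i => permHamming (b i) (c i)) l (𝓝 t)) :
    Tendsto (fun i => permHamming (a i) (c i)) l (𝓝 t) := by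
  have hdiff : Tendsto (fun i => permHamming (a i) (c i) - permHamming (b i) (c i)) l (𝓝 0) :=
    squeeze_zero_norm (fun i => abs_permHamming_sub_permHamming_le _ _ _)
      (asymptoticPerm_mk_eq_iff.1 hab)
  simpa using hdiff.add hb

/-- The homomorphism into `AsymptoticPerm k l` defined by an asymptotically multiplicative family
of maps `Γ → S_{kᵢ}`. -/
def asymptoticHom {Γ : Type*} [Group Γ] (f : ∀ i, Γ → Equiv.Perm (Fin (k i)))
    (hmul : ∀ x y, Tendsto (fun i => permHamming (f i x * f i y) (f i (x * y))) l (𝓝 0)) :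
    Γ →* AsymptoticPerm k l :=
  MonoidHom.mk' (fun x => ((fun i => f i x : ∀ i, Equiv.Perm (Fin (k i))) : AsymptoticPerm k l))
    fun x y => (asymptoticPerm_mk_eq_iff.2 (hmul x y)).symm

theorem tendsto_permFixRatio_iff_tendsto_permHamming (hk : ∀ i, 0 < k i)
    {a : ∀ i, Equiv.Perm (Fin (k i))} {t : ℝ} :
    Tendsto (fun i => (permFixRatio (a i) : ℂ)) l (𝓝 ((1 - t : ℝ) : ℂ)) ↔
      Tendsto (fun i => permHamming (a i) 1) l (𝓝 t) := by
  rw [tendsto_ofReal_iff]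
  simp only [permFixRatio_eq_one_sub_permHamming _ (hk _)]
  exact ⟨fun h => by simpa using h.const_sub 1, fun h => h.const_sub 1⟩

end AsymptoticEquality

theorem freeGroup_exists_comp_eq_of_surjective {α H K : Type*} [Group H] [Group K] {p : H →* K}
    (hp : Function.Surjective p) (θ : FreeGroup α →* K) :
    ∃ Θ : FreeGroup α →* H, p.comp Θ = θ := by
  choose s hs using hp
  exact ⟨FreeGroup.lift fun i => s (θ (FreeGroup.of i)),
    FreeGroup.ext_hom _ _ fun i => by simp [hs]⟩

section Trace

variable {Γ : Type*} [Group Γ]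

theorem canonicalTrace_one : canonicalTrace Γ 1 = 1 := if_pos rfl

theorem canonicalTrace_of_ne_one {x : Γ} (hx : x ≠ 1) : canonicalTrace Γ x = 0 := if_neg hx

/-- `χ` is a pointwise limit of a sequence of permutational traces on `G`. -/
def IsLimitOfPermutationalTraces {G : Type*} [Group G] (χ : G → ℂ) : Prop :=
  ∃ ψ : ℕ → G → ℂ, (∀ m, IsPermutationalTrace (ψ m)) ∧
    ∀ g, Tendsto (fun m => ψ m g) atTop (𝓝 (χ g))

theorem IsSofic.isLimitOfPermutationalTraces {α : Type*} (hΓ : IsSofic Γ)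
    (φ : FreeGroup α →* Γ) :
    IsLimitOfPermutationalTraces fun g => canonicalTrace Γ (φ g) := by
  obtain ⟨k, f, hk, hmul, hfree⟩ := hΓ
  obtain ⟨π, hπ⟩ := freeGroup_exists_comp_eq_of_surjective
    (QuotientGroup.mk'_surjective (asymptoticallyTrivial k atTop)) ((asymptoticHom f hmul).comp φ)
  have mk_π (g) : (π g : AsymptoticPerm k atTop) = asymptoticHom f hmul (φ g) :=
    DFunLike.congr_fun hπ g
  refine ⟨fun n g => permFixRatio (π g n),
    fun n => ⟨k n, hk n, (Pi.evalMonoidHom _ n).comp π, rfl⟩, fun g => ?_⟩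
  by_cases hg : φ g = 1
  · have hlim : Tendsto (fun n => permHamming (π g n) 1) atTop (𝓝 0) :=
      mem_asymptoticallyTrivial_iff.1 <| (QuotientGroup.eq_one_iff _).1 <| by
        rw [mk_π, hg, map_one]
    simpa [hg, canonicalTrace_one] using (tendsto_permFixRatio_iff_tendsto_permHamming hk).2 hlim
  · have hlim : Tendsto (fun n => permHamming (π g n) 1) atTop (𝓝 1) :=
      tendsto_permHamming_of_asymptoticPerm_mk_eq (mk_π g) (hfree _ hg)
    simpa [canonicalTrace_of_ne_one hg] using
      (tendsto_permFixRatio_iff_tendsto_permHamming hk).2 hlim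

theorem IsLimitOfPermutationalTraces.isSofic {G : Type*} [Group G] {φ : G →* Γ}
    (hφ : Function.Surjective φ)
    (hlim : IsLimitOfPermutationalTraces fun g => canonicalTrace Γ (φ g)) : IsSofic Γ := by
  obtain ⟨ψ, hψ, hlim⟩ := hlim
  choose k hk π hπ using hψ
  simp only [hπ] at hlim
  have tendsto_zero {g} (hg : φ g = 1) :
      Tendsto (fun m => permHamming (π m g) 1) atTop (𝓝 0) :=
    (tendsto_permFixRatio_iff_tendsto_permHamming hk).1 <| by
      simpa [hg, canonicalTrace_one] using hlim g
  have tendsto_one {g} (hg : φ g ≠ 1) :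
      Tendsto (fun m => permHamming (π m g) 1) atTop (𝓝 1) :=
    (tendsto_permFixRatio_iff_tendsto_permHamming hk).1 <| by
      simpa [canonicalTrace_of_ne_one hg] using hlim g
  choose s hs using hφ
  refine ⟨k, fun m x => π m (s x), hk, fun x y => ?_, fun x hx => tendsto_one (by rwa [hs])⟩
  have defect_mem_ker : φ ((s (x * y))⁻¹ * (s x * s y)) = 1 := by simp [hs]
  simpa only [map_mul, map_inv, permHamming_inv_mul_one] using tendsto_zero defect_mem_ker

end Trace

/-- a countable group `Γ` is sofic iff (ii) there is a surjection
`φ : G → Γ` from some group `G` such that `τ_Γ ∘ φ` is a pointwise limit of permutational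
traces, iff (iii) for every surjection `φ : F_∞ → Γ`, `τ_Γ ∘ φ` is a pointwise limit of
permutational traces. -/
theorem stmt10 {Γ : Type*} [Group Γ] [Countable Γ] :
    (IsSofic Γ ↔
      ∃ (G : Type) (_ : Group G) (φ : G →* Γ), Function.Surjective φ ∧
        ∃ ψ : ℕ → G → ℂ, (∀ m, IsPermutationalTrace (ψ m)) ∧
          ∀ g : G, Tendsto (fun m => ψ m g) atTop (𝓝 (canonicalTrace Γ (φ g)))) ∧
    (IsSofic Γ ↔
      ∀ φ : FreeGroup ℕ →* Γ, Function.Surjective φ →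
        ∃ ψ : ℕ → FreeGroup ℕ → ℂ, (∀ m, IsPermutationalTrace (ψ m)) ∧
          ∀ g : FreeGroup ℕ, Tendsto (fun m => ψ m g) atTop (𝓝 (canonicalTrace Γ (φ g)))) := by
  obtain ⟨e, he⟩ := exists_surjective_nat Γ
  have hφ₀ : Function.Surjective (FreeGroup.lift e) := FreeGroup.lift_surjective_of_surjective he
  refine ⟨⟨fun hΓ => ?_, ?_⟩, fun hΓ φ _ => ?_, fun hlim => ?_⟩
  · exact ⟨FreeGroup ℕ, inferInstance, FreeGroup.lift e, hφ₀, hΓ.isLimitOfPermutationalTraces _⟩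
  · rintro ⟨G, _, φ, hφ, hlim⟩
    exact IsLimitOfPermutationalTraces.isSofic hφ hlim
  · exact hΓ.isLimitOfPermutationalTraces φ
  · exact IsLimitOfPermutationalTraces.isSofic hφ₀ (hlim _ hφ₀)

end
end
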